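/- Let Q : ℕ → Q̄_n, let ε > 0 be real and N ≥ 1 an integer. If σ_min(Σ_{k=0}^{N−1} Q_k) ≥ ε, then σ_min(Σ_{k=0}^{N−1} Q_k²) ≥ ε² / (N² n²). -/

import Mathlib

open Matrix Filter
open scoped Kronecker

noncomputable section

/-- Euclidean norm of a vector. -/
def eunorm {ι : Type*} [Fintype ι] (v : ι → ℝ) : ℝ := Real.sqrt (∑ i, v i ^ 2)

/-- Spectral (induced 2-) norm of a matrix. -/
def specNorm {m n : Type*} [Fintype m] [Fintype n] (M : Matrix m n ℝ) : ℝ :=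
  sSup {c : ℝ | ∃ v : n → ℝ, eunorm v ≤ 1 ∧ c = eunorm (M.mulVec v)}

/-- Smallest singular value of a matrix. -/
def sigmaMin {m n : Type*} [Fintype m] [Fintype n] (M : Matrix m n ℝ) : ℝ :=
  sInf {c : ℝ | ∃ v : n → ℝ, eunorm v = 1 ∧ c = eunorm (M.mulVec v)}

/-- Largest singular value of a matrix. -/
def sigmaMax {m n : Type*} [Fintype m] [Fintype n] (M : Matrix m n ℝ) : ℝ :=
  sSup {c : ℝ | ∃ v : n → ℝ, eunorm v = 1 ∧ c = eunorm (M.mulVec v)}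

/-- A discrete-time interconnection matrix: entrywise nonnegative and row-stochastic. -/
def IsInterconnectionDT {p : ℕ} (Λ : Matrix (Fin p) (Fin p) ℝ) : Prop :=
  (∀ i j, 0 ≤ Λ i j) ∧ ∀ i, ∑ j, Λ i j = 1

/-- Connectedness of the graph of a matrix (edge `(i,j)` iff the `(i,j)` entry is positive):
there is a node to which there is a directed path from every other node. -/
def ConnectedMat {p : ℕ} (Λ : Matrix (Fin p) (Fin p) ℝ) : Prop :=
  ∃ v : Fin p, ∀ u : Fin p, Relation.ReflTransGen (fun i j => 0 < Λ i j) u v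

/-- Membership in `Q̄_n`: symmetric positive semidefinite with spectral norm at most 1. -/
def InQbar {n : ℕ} (R : Matrix (Fin n) (Fin n) ℝ) : Prop :=
  R.PosSemidef ∧ specNorm R ≤ 1

/-- `δ(ε, N) = ε⁴/(16 N⁸ n⁴)` (discrete time). -/
def deltaDT (n : ℕ) (ε : ℝ) (N : ℕ) : ℝ := ε ^ 4 / (16 * (N : ℝ) ^ 8 * (n : ℝ) ^ 4)

/-- Sufficient excitation for `Q : ℕ → Q_n` (discrete-time sense). -/
def SuffExcitingDT {n : ℕ} (Q : ℕ → Matrix (Fin n) (Fin n) ℝ) : Prop :=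
  ∃ (ε : ℕ → ℝ) (N : ℕ → ℕ), (∀ i, 0 < ε i) ∧ (∀ i, 1 ≤ N i) ∧
    (∀ i, ε i ≤ sigmaMin (∑ k ∈ Finset.Ico (∑ j ∈ Finset.range i, N j)
      ((∑ j ∈ Finset.range i, N j) + N i), Q k)) ∧
    Tendsto (fun M => ∑ i ∈ Finset.range M, deltaDT n (ε i) (N i)) atTop atTop

/-- Persistence of excitation for `Q : ℕ → Q_n` (discrete-time sense). -/
def PersExcitingDT {n : ℕ} (Q : ℕ → Matrix (Fin n) (Fin n) ℝ) : Prop :=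
  ∃ (ε : ℝ) (N : ℕ), 0 < ε ∧ 1 ≤ N ∧ ∀ k₀ : ℕ,
    ε ≤ sigmaMin (∑ k ∈ Finset.Ico k₀ (k₀ + N), Q k)

lemma eunorm_nonneg {ι : Type*} [Fintype ι] (v : ι → ℝ) : 0 ≤ eunorm v :=
  Real.sqrt_nonneg _

lemma eunorm_sq {ι : Type*} [Fintype ι] (v : ι → ℝ) : eunorm v ^ 2 = ∑ i, v i ^ 2 :=
  Real.sq_sqrt (Finset.sum_nonneg fun _ _ => sq_nonneg _)

lemma dotProduct_le_eunorm_mul_eunorm {ι : Type*} [Fintype ι] (v w : ι → ℝ) :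
    v ⬝ᵥ w ≤ eunorm v * eunorm w :=
  Real.sum_mul_le_sqrt_mul_sqrt _ _ _

lemma sigmaMin_le_eunorm_mulVec {m n : Type*} [Fintype m] [Fintype n] (M : Matrix m n ℝ)
    {v : n → ℝ} (hv : eunorm v = 1) : sigmaMin M ≤ eunorm (M *ᵥ v) :=
  csInf_le ⟨0, by rintro _ ⟨w, _, rfl⟩; exact eunorm_nonneg _⟩ ⟨v, hv, rfl⟩

/-- Cauchy–Schwarz for a finite sum of vectors. -/
lemma eunorm_sum_sq_le {ι κ : Type*} [Fintype ι] (s : Finset κ) (w : κ → ι → ℝ) :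
    eunorm (∑ k ∈ s, w k) ^ 2 ≤ s.card * ∑ k ∈ s, eunorm (w k) ^ 2 := by
  simp only [eunorm_sq, Finset.sum_apply]
  rw [Finset.sum_comm, Finset.mul_sum]
  exact Finset.sum_le_sum fun i _ => sq_sum_le_card_mul_sum_sq

lemma Matrix.IsHermitian.dotProduct_sq_mulVec {n : Type*} [Fintype n] [DecidableEq n]
    {A : Matrix n n ℝ} (hA : A.IsHermitian) (v : n → ℝ) :
    v ⬝ᵥ (A ^ 2 *ᵥ v) = eunorm (A *ᵥ v) ^ 2 := by
  have hT : Aᵀ = A := by simpa [conjTranspose_eq_transpose_of_trivial] using hA.eq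
  rw [eunorm_sq, pow_two, ← mulVec_mulVec, dotProduct_mulVec, ← mulVec_transpose, hT]
  simp [dotProduct, pow_two]

/-- For unit vectors, `|(∑ Q k) v|² ≤ N |(∑ Q k ^ 2) v|` when the `Q k` are symmetric. -/
lemma eunorm_sum_mulVec_sq_le {n κ : Type*} [Fintype n] [DecidableEq n] (s : Finset κ)
    {Q : κ → Matrix n n ℝ} (hQ : ∀ k, (Q k).IsHermitian) {v : n → ℝ} (hv : eunorm v = 1) :
    eunorm ((∑ k ∈ s, Q k) *ᵥ v) ^ 2 ≤ s.card * eunorm ((∑ k ∈ s, Q k ^ 2) *ᵥ v) := by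
  rw [sum_mulVec]
  refine (eunorm_sum_sq_le s _).trans (mul_le_mul_of_nonneg_left ?_ (Nat.cast_nonneg _))
  calc ∑ k ∈ s, eunorm (Q k *ᵥ v) ^ 2 = v ⬝ᵥ ((∑ k ∈ s, Q k ^ 2) *ᵥ v) := by
        rw [sum_mulVec, dotProduct_sum]
        exact Finset.sum_congr rfl fun k _ => ((hQ k).dotProduct_sq_mulVec v).symm
    _ ≤ eunorm v * eunorm ((∑ k ∈ s, Q k ^ 2) *ᵥ v) := dotProduct_le_eunorm_mul_eunorm _ _
    _ = eunorm ((∑ k ∈ s, Q k ^ 2) *ᵥ v) := by rw [hv, one_mul]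

theorem stmt14 {n : ℕ} (Q : ℕ → Matrix (Fin n) (Fin n) ℝ)
    (hQ : ∀ k, InQbar (Q k))
    (ε : ℝ) (hε : 0 < ε) (N : ℕ) (hN : 1 ≤ N)
    (h : ε ≤ sigmaMin (∑ k ∈ Finset.range N, Q k)) :
    ε ^ 2 / ((N : ℝ) ^ 2 * (n : ℝ) ^ 2)
      ≤ sigmaMin (∑ k ∈ Finset.range N, Q k ^ 2) := by
  rcases Nat.eq_zero_or_pos n with rfl | hn
  · simp [sigmaMin, eunorm] at h
    linarith
  have hN' : (1 : ℝ) ≤ N := by exact_mod_cast hN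
  have hn' : (1 : ℝ) ≤ n := by exact_mod_cast hn
  refine le_csInf ⟨_, Pi.single ⟨0, hn⟩ 1, ?_, rfl⟩ ?_
  · simp [eunorm, Pi.single_apply]
  rintro _ ⟨v, hv, rfl⟩
  have hsq := eunorm_sum_mulVec_sq_le (Finset.range N) (fun k => (hQ k).1.isHermitian) hv
  have hle : ε ^ 2 ≤ eunorm ((∑ k ∈ Finset.range N, Q k) *ᵥ v) ^ 2 :=
    pow_le_pow_left₀ hε.le (h.trans (sigmaMin_le_eunorm_mulVec _ hv)) 2
  rw [Finset.card_range] at hsq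
  rw [div_le_iff₀ (by positivity), mul_comm]
  refine (hle.trans hsq).trans (mul_le_mul_of_nonneg_right ?_ (eunorm_nonneg _))
  nlinarith [one_le_pow₀ hn' (n := 2), sq_nonneg (N : ℝ)]
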